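/- Let f : E → ℝ be convex and differentiable with locally Lipschitz gradient ∇f, g : E → ℝ convex, Φ := f + g, and assume Φ attains its minimum on E. Let θ ∈ [1,2], α ∈ (0, √2 − 1), λ_max > 0. Let (x_n)_{n≥0}, (y_n)_{n≥0} be sequences in E and (λ_n)_{n≥0}, (θ_n)_{n≥1} positive reals with θ_0 := 1 such that for all n ≥ 1: 0 < λ_n ≤ λ_max, λ_n = (2 − 1/θ)·θ_n·λ_{n−1}, θ_n² ≤ (1 + θ·θ_{n−1})/(2θ − 1), θ_n ≤ 2, y_n = x_n + θ_n·(x_n − x_{n−1}), λ_n·‖∇f(y_n) − ∇f(y_{n−1})‖ ≤ α·(2 − 1/θ)·‖y_n − y_{n−1}‖, and for all n ≥ 0, x_{n+1} is the minimizer over E of z ↦ λ_n·g(z) + (1/2)·‖z − (x_n − λ_n·∇f(y_n))‖². Assume moreover that limsup λ_n > 0. Then (x_n) and (y_n) converge to a minimizer of Φ. -/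

import Mathlib

open scoped RealInnerProductSpace

/-!
For a minimizer `s` of `Φ = f + g`, the energy
`‖s - xₙ₊₁‖² + (2 th - 1) α ‖xₙ₊₁ - yₙ‖² + 2 λₙ (1 + th θₙ) (Φ xₙ - Φ s)`
decreases: the forward-backward inequality for `xₙ₊₂` is tested against `s` and `xₙ₊₁`, the
subgradient inequalities of `f` and `g` at `xₙ₊₁` are tested against `xₙ` and against `yₙ₊₁` and
`xₙ₊₂` respectively, and the line search absorbs the remaining difference of gradients. The
decrease dominates a multiple of `‖yₙ₊₁ - xₙ₊₁‖² + ‖xₙ₊₂ - yₙ₊₁‖²`, so `x` is bounded while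
`yₙ - xₙ` and `xₙ₊₁ - yₙ` tend to zero. Along a subsequence on which `λₙ` stays away from zero, `x`
has a cluster point, which has to minimize `Φ`. The energy relative to that minimizer tends to zero
along the subsequence, hence along the whole sequence by monotonicity.
-/

open Filter Set Topology

section Subgradient

variable {E : Type*} [NormedAddCommGroup E] [InnerProductSpace ℝ E] {f g : E → ℝ}

/-- `v` is a subgradient at `x` of the everywhere finite function `f`, i.e. `v ∈ ∂f(x)`. -/
def IsSubgradientAt (f : E → ℝ) (v x : E) : Prop :=
  ∀ z, f x + ⟪v, z - x⟫ ≤ f z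

theorem convexOn_univ_of_forall_isSubgradientAt {f' : E → E}
    (hf' : ∀ z, IsSubgradientAt f (f' z) z) : ConvexOn ℝ univ f := by
  refine ⟨convex_univ, fun x _ y _ a b ha hb hab => ?_⟩
  set m := a • x + b • y with hm
  have hbary : a • (x - m) + b • (y - m) = 0 := by
    rw [smul_sub, smul_sub, sub_add_sub_comm, ← add_smul, hab, one_smul, ← hm, sub_self]
  have hcancel : a * ⟪f' m, x - m⟫ + b * ⟪f' m, y - m⟫ = 0 := by
    rw [← real_inner_smul_right, ← real_inner_smul_right, ← inner_add_right, hbary,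
      inner_zero_right]
  have hx := mul_le_mul_of_nonneg_left (hf' m x) ha
  have hy := mul_le_mul_of_nonneg_left (hf' m y) hb
  simp only [smul_eq_mul]
  linear_combination hx + hy - hcancel - f m * hab

theorem isSubgradientAt_neg_of_forall_add_le {h : E → ℝ} {d p : E} (hg : ConvexOn ℝ univ g)
    (hh : HasFDerivAt h (innerSL ℝ d) p) (hmin : ∀ z, g p + h p ≤ g z + h z) :
    IsSubgradientAt g (-d) p := by
  intro z
  have hslope : ∀ᶠ t in 𝓝[>] (0 : ℝ), g p - g z ≤ t⁻¹ • (h (p + t • (z - p)) - h p) := by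
    filter_upwards [Ioo_mem_nhdsGT one_pos] with t ht
    have hconv := hg.2 (mem_univ p) (mem_univ z) (sub_nonneg.2 ht.2.le) ht.1.le
      (sub_add_cancel 1 t)
    rw [show (1 - t) • p + t • z = p + t • (z - p) by module, smul_eq_mul, smul_eq_mul] at hconv
    rw [smul_eq_mul, le_inv_mul_iff₀ ht.1]
    linarith [hmin (p + t • (z - p))]
  have hlim := ge_of_tendsto (hh.hasLineDerivAt (z - p)).tendsto_slope_zero_right hslope
  rw [innerSL_apply_apply] at hlim
  rw [inner_neg_left]
  linarith

theorem isSubgradientAt_of_hasGradientAt [CompleteSpace E] {d x : E} (hf : ConvexOn ℝ univ f)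
    (hd : HasGradientAt f d x) : IsSubgradientAt f d x := by
  have hneg : HasFDerivAt (-f) (innerSL ℝ (-d)) x := by
    rw [map_neg]
    exact hd.hasFDerivAt.neg
  simpa only [neg_neg] using isSubgradientAt_neg_of_forall_add_le hf hneg (by simp)

theorem isSubgradientAt_of_prox {c : ℝ} (hc : 0 < c) (hg : ConvexOn ℝ univ g) {p w : E}
    (hp : ∀ z, c * g p + 1 / 2 * ‖p - w‖ ^ 2 ≤ c * g z + 1 / 2 * ‖z - w‖ ^ 2) :
    IsSubgradientAt g (c⁻¹ • (w - p)) p := by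
  have hquad : HasFDerivAt (fun z => c⁻¹ * (1 / 2 * ‖z - w‖ ^ 2)) (innerSL ℝ (c⁻¹ • (p - w)))
      p := by
    have hsq := (((hasFDerivAt_id p).sub_const w).norm_sq.const_mul (1 / 2)).const_mul c⁻¹
    refine hsq.congr_fderiv ?_
    ext z
    simp
  have hmin (z : E) : g p + c⁻¹ * (1 / 2 * ‖p - w‖ ^ 2) ≤ g z + c⁻¹ * (1 / 2 * ‖z - w‖ ^ 2) := by
    have hscaled := mul_le_mul_of_nonneg_left (hp z) (inv_pos.2 hc).le
    rwa [mul_add, mul_add, inv_mul_cancel_left₀ hc.ne', inv_mul_cancel_left₀ hc.ne'] at hscaled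
  simpa only [← smul_neg, neg_sub] using isSubgradientAt_neg_of_forall_add_le hg hquad hmin

theorem IsSubgradientAt.extrapolation_le {v x : E} (hv : IsSubgradientAt f v x) {t : ℝ}
    (ht : 0 ≤ t) (x' z : E) :
    (1 + t) * f x - t * f x' ≤ f z + ⟪v, x + t • (x - x') - z⟫ := by
  have hx' := mul_le_mul_of_nonneg_left (hv x') ht
  have hinner : ⟪v, x + t • (x - x') - z⟫ = -⟪v, z - x⟫ - t * ⟪v, x' - x⟫ := by
    rw [← real_inner_smul_right, ← inner_neg_right, ← inner_sub_right]
    congr 1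
    module
  linarith [hv z]

theorem forwardBackward_gap_le {b x y p : E} {c : ℝ} (hb : IsSubgradientAt f b y)
    (hp : IsSubgradientAt g (c⁻¹ • (x - p) - b) p) (z : E) :
    f y + g p - (f + g) z ≤ c⁻¹ * ⟪p - x, z - p⟫ + ⟪b, y - p⟫ := by
  have hpz := hp z
  have hbz := hb z
  have hsplit : ⟪b, z - y⟫ = ⟪b, z - p⟫ - ⟪b, y - p⟫ := by
    rw [← inner_sub_right, sub_sub_sub_cancel_right]
  rw [inner_sub_left, real_inner_smul_left, ← neg_sub p x, inner_neg_left] at hpz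
  rw [Pi.add_apply]
  linarith

theorem add_le_of_tendsto_forwardBackward {ι : Type*} {l : Filter ι} [l.NeBot] {a : E}
    (hf : ContinuousAt f a) (hg : ContinuousAt g a) {x y p b : ι → E} {c : ι → ℝ} {δ : ℝ}
    (hδ : 0 < δ) (hc : ∀ i, δ < c i) (hb : ∀ i, IsSubgradientAt f (b i) (y i))
    (hp : ∀ i, IsSubgradientAt g ((c i)⁻¹ • (x i - p i) - b i) (p i))
    (hx : Tendsto x l (𝓝 a)) (hy : Tendsto y l (𝓝 a)) (hpa : Tendsto p l (𝓝 a)) (z : E) :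
    (f + g) a ≤ (f + g) z := by
  have hgap (i : ι) : f (y i) + g (p i) - (f + g) z ≤
      δ⁻¹ * (‖p i - x i‖ * ‖z - p i‖) + (f (y i + (y i - p i)) - f (y i)) := by
    have hprox : (c i)⁻¹ * ⟪p i - x i, z - p i⟫ ≤ δ⁻¹ * (‖p i - x i‖ * ‖z - p i‖) := by
      have := hδ.trans (hc i)
      have := (hc i).le
      grw [real_inner_le_norm, this]
    -- Testing at the reflection of `p i` in `y i` controls `⟪b i, y i - p i⟫` without bounding `b`.
    have hgrad := hb i (y i + (y i - p i))
    rw [add_sub_cancel_left] at hgrad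
    linarith [forwardBackward_gap_le (hb i) (hp i) z]
  have hfy : Tendsto (fun i => f (y i)) l (𝓝 (f a)) := hf.tendsto.comp hy
  have hreflect : Tendsto (fun i => y i + (y i - p i)) l (𝓝 a) := by
    simpa using hy.add (hy.sub hpa)
  have hleft := (hfy.add (hg.tendsto.comp hpa)).sub_const ((f + g) z)
  have hright := (((hpa.sub hx).norm.mul (hpa.const_sub z).norm).const_mul δ⁻¹).add
    ((hf.tendsto.comp hreflect).sub hfy)
  have hle := le_of_tendsto_of_tendsto' hleft hright hgap
  simp only [sub_self, norm_zero, zero_mul, mul_zero, add_zero] at hle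
  exact sub_nonpos.1 hle

end Subgradient

theorem two_mul_add_mul_le (p q b : ℝ) :
    2 * ((p + q) * b) ≤ (1 + √2) * p ^ 2 + √2 * b ^ 2 + q ^ 2 := by
  have hsq : √2 ^ 2 = 2 := Real.sq_sqrt zero_le_two
  have hone : 0 ≤ √2 - 1 := sub_nonneg.2 (Real.one_le_sqrt.2 one_le_two)
  have hsos : (1 + √2) * p ^ 2 + √2 * b ^ 2 + q ^ 2 - 2 * ((p + q) * b) =
      (√2 - 1) * ((1 + √2) * p - b) ^ 2 + (q - b) ^ 2 := by
    linear_combination (2 * p * b - (1 + √2) * p ^ 2) * hsq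
  linarith [mul_nonneg hone (sq_nonneg ((1 + √2) * p - b)), sq_nonneg (q - b)]

theorem two_mul_inner_add_eq {E : Type*} [NormedAddCommGroup E] [InnerProductSpace ℝ E]
    (p d w : E) (T : ℝ) :
    2 * (⟪p + d, w⟫ - (T - 1) * ‖p + d‖ ^ 2 + (2 * T - 1) * ⟪p, d⟫) =
      ‖p + d + w‖ ^ 2 - ‖w‖ ^ 2 - (2 * T - 1) * (‖p‖ ^ 2 + ‖d‖ ^ 2) := by
  rw [norm_add_sq_real (p + d) w, norm_add_sq_real p d]
  ring

theorem one_sub_mul_one_add_sqrt_two_pos {α : ℝ} (hα : α < √2 - 1) : 0 < 1 - α * (1 + √2) := by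
  have hsq : √2 ^ 2 = 2 := Real.sq_sqrt zero_le_two
  have hmul := mul_lt_mul_of_pos_right hα (by positivity : 0 < 1 + √2)
  linear_combination hmul + hsq

theorem tendsto_zero_of_tendsto_norm_succ_sq {E : Type*} [SeminormedAddCommGroup E] {u : ℕ → E}
    (hu : Tendsto (fun n => ‖u (n + 1)‖ ^ 2) atTop (𝓝 0)) : Tendsto u atTop (𝓝 0) := by
  rw [← tendsto_add_atTop_iff_nat 1, tendsto_zero_iff_norm_tendsto_zero]
  simpa using hu.sqrt

/-- The sequences `x`, `y`, the step sizes `lam` and the extrapolation parameters `θ` are produced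
by the adaptive proximal gradient method with extrapolation for `f + g`, with admissible parameters
`th` (the paper's `θ`, whose `θₙ` is `θ n`) and `α`; `f'` plays the role of `∇f`. Recursions are
indexed from `n` to `n + 1`, so that no predecessor occurs, and `θ 0 > 0` is arbitrary. -/
structure IsExtrapolatedProxGrad {E : Type*} [NormedAddCommGroup E] [InnerProductSpace ℝ E]
    (f' : E → E) (g : E → ℝ) (th α : ℝ) (x y : ℕ → E) (lam θ : ℕ → ℝ) : Prop where
  one_le_th : 1 ≤ th
  α_nonneg : 0 ≤ α
  α_lt : α < √2 - 1
  lam_pos : ∀ n, 0 < lam n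
  θ_pos : ∀ n, 0 < θ n
  lam_succ : ∀ n, lam (n + 1) = (2 - 1 / th) * θ (n + 1) * lam n
  θ_succ_sq_le : ∀ n, θ (n + 1) ^ 2 ≤ (1 + th * θ n) / (2 * th - 1)
  y_succ : ∀ n, y (n + 1) = x (n + 1) + θ (n + 1) • (x (n + 1) - x n)
  lineSearch : ∀ n, lam (n + 1) * ‖f' (y (n + 1)) - f' (y n)‖ ≤
    α * (2 - 1 / th) * ‖y (n + 1) - y n‖
  prox : ∀ n z, lam n * g (x (n + 1)) + 1 / 2 * ‖x (n + 1) - (x n - lam n • f' (y n))‖ ^ 2 ≤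
    lam n * g z + 1 / 2 * ‖z - (x n - lam n • f' (y n))‖ ^ 2

namespace IsExtrapolatedProxGrad

/-- The Lyapunov function of the method relative to the reference point `s`. -/
noncomputable def energy {E : Type*} [NormedAddCommGroup E] (Φ : E → ℝ) (th α : ℝ) (x y : ℕ → E)
    (lam θ : ℕ → ℝ) (s : E) (n : ℕ) : ℝ :=
  ‖s - x (n + 1)‖ ^ 2 + (2 * th - 1) * α * ‖x (n + 1) - y n‖ ^ 2 +
    2 * lam n * (1 + th * θ n) * (Φ (x n) - Φ s)

variable {E : Type*} [NormedAddCommGroup E] [InnerProductSpace ℝ E] {f g Φ : E → ℝ} {f' : E → E}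
  {th α : ℝ} {x y : ℕ → E} {lam θ : ℕ → ℝ} {s : E}

theorem isSubgradientAt_succ (h : IsExtrapolatedProxGrad f' g th α x y lam θ)
    (hg : ConvexOn ℝ univ g) (n : ℕ) :
    IsSubgradientAt g ((lam n)⁻¹ • (x n - x (n + 1)) - f' (y n)) (x (n + 1)) := by
  have hsub := isSubgradientAt_of_prox (h.lam_pos n) hg (h.prox n)
  rwa [sub_right_comm, smul_sub, inv_smul_smul₀ (h.lam_pos n).ne'] at hsub

theorem two_mul_th_sub_one_pos (h : IsExtrapolatedProxGrad f' g th α x y lam θ) :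
    0 < 2 * th - 1 := by
  linarith [h.one_le_th]

theorem th_mul_two_sub_inv (h : IsExtrapolatedProxGrad f' g th α x y lam θ) :
    th * (2 - 1 / th) = 2 * th - 1 := by
  have := one_pos.trans_le h.one_le_th
  field_simp

theorem th_mul_lam_succ (h : IsExtrapolatedProxGrad f' g th α x y lam θ) (n : ℕ) :
    th * lam (n + 1) = (2 * th - 1) * θ (n + 1) * lam n := by
  rw [h.lam_succ, ← h.th_mul_two_sub_inv]
  ring

theorem lam_succ_mul_le (h : IsExtrapolatedProxGrad f' g th α x y lam θ) (n : ℕ) :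
    lam (n + 1) * (th * θ (n + 1)) ≤ lam n * (1 + th * θ n) := by
  have hθ := (le_div_iff₀ h.two_mul_th_sub_one_pos).1 (h.θ_succ_sq_le n)
  calc
    lam (n + 1) * (th * θ (n + 1)) = lam n * (θ (n + 1) ^ 2 * (2 * th - 1)) := by
      linear_combination θ (n + 1) * h.th_mul_lam_succ n
    _ ≤ lam n * (1 + th * θ n) := mul_le_mul_of_nonneg_left hθ (h.lam_pos n).le

theorem θ_le (h : IsExtrapolatedProxGrad f' g th α x y lam θ) (n : ℕ) : θ n ≤ max 2 (θ 0) := by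
  induction n with
  | zero => exact le_max_right _ _
  | succ n ih =>
    have hth := h.one_le_th
    have hsq : θ (n + 1) ^ 2 ≤ 1 + θ n := by
      refine (h.θ_succ_sq_le n).trans ((div_le_iff₀ h.two_mul_th_sub_one_pos).2 ?_)
      linarith [mul_nonneg (sub_nonneg.2 hth) (h.θ_pos n).le]
    have htwo : 2 ≤ max 2 (θ 0) := le_max_left _ _
    refine le_of_sq_le_sq ?_ (by positivity)
    nlinarith

theorem th_mul_lam_succ_mul_norm_sub_le (h : IsExtrapolatedProxGrad f' g th α x y lam θ) (n : ℕ) :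
    th * lam (n + 1) * ‖f' (y (n + 1)) - f' (y n)‖ ≤
      (2 * th - 1) * α * (‖y (n + 1) - x (n + 1)‖ + ‖x (n + 1) - y n‖) := by
  have hth : 0 ≤ th := zero_le_one.trans h.one_le_th
  have hcoeff : 0 ≤ (2 * th - 1) * α := mul_nonneg h.two_mul_th_sub_one_pos.le h.α_nonneg
  calc
    th * lam (n + 1) * ‖f' (y (n + 1)) - f' (y n)‖
        ≤ th * (α * (2 - 1 / th) * ‖y (n + 1) - y n‖) := by
      rw [mul_assoc]
      exact mul_le_mul_of_nonneg_left (h.lineSearch n) hth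
    _ = (2 * th - 1) * α * ‖y (n + 1) - y n‖ := by
      rw [← h.th_mul_two_sub_inv]
      ring
    _ ≤ _ := mul_le_mul_of_nonneg_left (norm_sub_le_norm_sub_add_norm_sub _ _ _) hcoeff

theorem lam_succ_mul_gap_le (h : IsExtrapolatedProxGrad f' g th α x y lam θ)
    (hf' : ∀ z, IsSubgradientAt f (f' z) z) (hg : ConvexOn ℝ univ g) (n : ℕ) (z : E) :
    lam (n + 1) * (f (y (n + 1)) + g (x (n + 2)) - (f + g) z) ≤
      ⟪x (n + 2) - x (n + 1), z - x (n + 2)⟫ +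
        lam (n + 1) * ⟪f' (y (n + 1)), y (n + 1) - x (n + 2)⟫ := by
  have hlam := h.lam_pos (n + 1)
  have hgap := mul_le_mul_of_nonneg_left
    (forwardBackward_gap_le (hf' (y (n + 1))) (h.isSubgradientAt_succ hg (n + 1)) z) hlam.le
  rwa [mul_add, mul_inv_cancel_left₀ hlam.ne'] at hgap

theorem th_mul_lam_succ_mul_extrapolation_le (h : IsExtrapolatedProxGrad f' g th α x y lam θ)
    (hf' : ∀ z, IsSubgradientAt f (f' z) z) (hg : ConvexOn ℝ univ g) (n : ℕ) :
    th * lam (n + 1) * ((1 + θ (n + 1)) * (f + g) (x (n + 1)) - θ (n + 1) * (f + g) (x n)) ≤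
      th * lam (n + 1) * (f (y (n + 1)) + g (x (n + 2))) +
        (2 * th - 1) * ⟪y (n + 1) - x (n + 1), x (n + 2) - y (n + 1)⟫ -
        th * lam (n + 1) * ⟪f' (y n), y (n + 1) - x (n + 2)⟫ := by
  have hθ := (h.θ_pos (n + 1)).le
  have hf := (hf' (x (n + 1))).extrapolation_le hθ (x n) (y (n + 1))
  have hg := (h.isSubgradientAt_succ hg n).extrapolation_le hθ (x n) (x (n + 2))
  rw [← h.y_succ, sub_self, inner_zero_right, add_zero] at hf
  rw [← h.y_succ, inner_sub_left, real_inner_smul_left] at hg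
  have hmomentum : th * lam (n + 1) * ((lam n)⁻¹ * ⟪x n - x (n + 1), y (n + 1) - x (n + 2)⟫) =
      (2 * th - 1) * ⟪y (n + 1) - x (n + 1), x (n + 2) - y (n + 1)⟫ := by
    have hy : y (n + 1) - x (n + 1) = θ (n + 1) • (x (n + 1) - x n) := by
      rw [h.y_succ, add_sub_cancel_left]
    rw [h.th_mul_lam_succ, hy, real_inner_smul_left, ← neg_sub (x (n + 1)) (x n),
      ← neg_sub (x (n + 2)) (y (n + 1)), inner_neg_neg, mul_assoc,
      mul_inv_cancel_left₀ (h.lam_pos n).ne', mul_assoc]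
  have hfg := mul_le_mul_of_nonneg_left (add_le_add hf hg)
    (mul_nonneg (zero_le_one.trans h.one_le_th) (h.lam_pos (n + 1)).le)
  simp only [Pi.add_apply]
  linear_combination hfg + hmomentum

theorem function_gap_le (h : IsExtrapolatedProxGrad f' g th α x y lam θ)
    (hf' : ∀ z, IsSubgradientAt f (f' z) z) (hg : ConvexOn ℝ univ g) (s : E) (n : ℕ) :
    lam (n + 1) * ((1 + th * θ (n + 1)) * ((f + g) (x (n + 1)) - (f + g) s) -
        th * θ (n + 1) * ((f + g) (x n) - (f + g) s)) ≤
      ⟪x (n + 2) - x (n + 1), s - x (n + 2)⟫ - (th - 1) * ‖x (n + 2) - x (n + 1)‖ ^ 2 +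
        (2 * th - 1) * ⟪y (n + 1) - x (n + 1), x (n + 2) - y (n + 1)⟫ +
        th * lam (n + 1) * ⟪f' (y (n + 1)) - f' (y n), y (n + 1) - x (n + 2)⟫ := by
  have hgap_s := h.lam_succ_mul_gap_le hf' hg n s
  have hgap_x := mul_le_mul_of_nonneg_left (h.lam_succ_mul_gap_le hf' hg n (x (n + 1)))
    (sub_nonneg.2 h.one_le_th)
  rw [← neg_sub (x (n + 2)) (x (n + 1)), inner_neg_right, real_inner_self_eq_norm_sq] at hgap_x
  rw [inner_sub_left (f' (y (n + 1)))]
  linear_combination hgap_s + hgap_x + h.th_mul_lam_succ_mul_extrapolation_le hf' hg n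

theorem two_mul_th_mul_lam_succ_mul_inner_le (h : IsExtrapolatedProxGrad f' g th α x y lam θ)
    (n : ℕ) :
    2 * (th * lam (n + 1) * ⟪f' (y (n + 1)) - f' (y n), y (n + 1) - x (n + 2)⟫) ≤
      (2 * th - 1) * α * ((1 + √2) * ‖y (n + 1) - x (n + 1)‖ ^ 2 +
        √2 * ‖x (n + 2) - y (n + 1)‖ ^ 2 + ‖x (n + 1) - y n‖ ^ 2) := by
  have hc : 0 ≤ (2 * th - 1) * α := mul_nonneg h.two_mul_th_sub_one_pos.le h.α_nonneg
  have hthlam : 0 ≤ th * lam (n + 1) :=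
    mul_nonneg (zero_le_one.trans h.one_le_th) (h.lam_pos (n + 1)).le
  calc
    2 * (th * lam (n + 1) * ⟪f' (y (n + 1)) - f' (y n), y (n + 1) - x (n + 2)⟫)
        ≤ 2 * (th * lam (n + 1) * ‖f' (y (n + 1)) - f' (y n)‖ * ‖x (n + 2) - y (n + 1)‖) := by
      rw [mul_assoc _ ‖_‖, norm_sub_rev (x (n + 2))]
      grw [real_inner_le_norm]
    _ ≤ 2 * ((2 * th - 1) * α * (‖y (n + 1) - x (n + 1)‖ + ‖x (n + 1) - y n‖) *
          ‖x (n + 2) - y (n + 1)‖) := by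
      grw [h.th_mul_lam_succ_mul_norm_sub_le n]
    _ = (2 * th - 1) * α * (2 * ((‖y (n + 1) - x (n + 1)‖ + ‖x (n + 1) - y n‖) *
          ‖x (n + 2) - y (n + 1)‖)) := by ring
    _ ≤ _ := mul_le_mul_of_nonneg_left (two_mul_add_mul_le _ _ _) hc

theorem energy_succ_add_le (h : IsExtrapolatedProxGrad f' g th α x y lam θ)
    (hf' : ∀ z, IsSubgradientAt f (f' z) z) (hg : ConvexOn ℝ univ g)
    (hs : ∀ z, (f + g) s ≤ (f + g) z) (n : ℕ) :
    energy (f + g) th α x y lam θ s (n + 1) + (2 * th - 1) * (1 - α * (1 + √2)) *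
      (‖y (n + 1) - x (n + 1)‖ ^ 2 + ‖x (n + 2) - y (n + 1)‖ ^ 2) ≤
    energy (f + g) th α x y lam θ s n := by
  have hgap := h.function_gap_le hf' hg s n
  have hnorm := two_mul_inner_add_eq (y (n + 1) - x (n + 1)) (x (n + 2) - y (n + 1))
    (s - x (n + 2)) th
  rw [sub_add_sub_cancel', sub_add_sub_cancel'] at hnorm
  have hweight := mul_le_mul_of_nonneg_right (h.lam_succ_mul_le n) (sub_nonneg.2 (hs (x n)))
  unfold energy
  linear_combination 2 * hgap + hnorm + h.two_mul_th_mul_lam_succ_mul_inner_le n + 2 * hweight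

theorem energy_antitone (h : IsExtrapolatedProxGrad f' g th α x y lam θ)
    (hf' : ∀ z, IsSubgradientAt f (f' z) z) (hg : ConvexOn ℝ univ g)
    (hs : ∀ z, (f + g) s ≤ (f + g) z) : Antitone (energy (f + g) th α x y lam θ s) := by
  refine antitone_nat_of_succ_le fun n => le_of_add_le_of_nonneg_left
    (h.energy_succ_add_le hf' hg hs n) ?_
  have := h.two_mul_th_sub_one_pos
  have := one_sub_mul_one_add_sqrt_two_pos h.α_lt
  positivity

theorem norm_sub_sq_le_energy (h : IsExtrapolatedProxGrad f' g th α x y lam θ)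
    (hs : ∀ z, Φ s ≤ Φ z) (n : ℕ) :
    ‖s - x (n + 1)‖ ^ 2 ≤ energy Φ th α x y lam θ s n := by
  have := h.two_mul_th_sub_one_pos
  have := h.α_nonneg
  have := h.one_le_th
  have := h.lam_pos n
  have := h.θ_pos n
  have := sub_nonneg.2 (hs (x n))
  unfold energy
  rw [add_assoc]
  exact le_add_of_nonneg_right (by positivity)

theorem tendsto_increments_sq (h : IsExtrapolatedProxGrad f' g th α x y lam θ)
    (hf' : ∀ z, IsSubgradientAt f (f' z) z) (hg : ConvexOn ℝ univ g)
    (hs : ∀ z, (f + g) s ≤ (f + g) z) :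
    Tendsto (fun n => ‖y (n + 1) - x (n + 1)‖ ^ 2 + ‖x (n + 2) - y (n + 1)‖ ^ 2) atTop (𝓝 0) := by
  set V := energy (f + g) th α x y lam θ s
  have hc : 0 < (2 * th - 1) * (1 - α * (1 + √2)) :=
    mul_pos h.two_mul_th_sub_one_pos (one_sub_mul_one_add_sqrt_two_pos h.α_lt)
  have hbdd : BddBelow (range V) :=
    ⟨0, forall_mem_range.2 fun n => (sq_nonneg _).trans (h.norm_sub_sq_le_energy hs n)⟩
  have hV := tendsto_atTop_ciInf (h.energy_antitone hf' hg hs) hbdd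
  have hdrop : Tendsto (fun n => (V n - V (n + 1)) / ((2 * th - 1) * (1 - α * (1 + √2)))) atTop
      (𝓝 0) := by
    simpa using (hV.sub (hV.comp (tendsto_add_atTop_nat 1))).div_const _
  refine squeeze_zero (fun n => by positivity) (fun n => (le_div_iff₀' hc).2 ?_) hdrop
  exact le_sub_iff_add_le'.2 (h.energy_succ_add_le hf' hg hs n)

theorem tendsto_y_sub_x (h : IsExtrapolatedProxGrad f' g th α x y lam θ)
    (hf' : ∀ z, IsSubgradientAt f (f' z) z) (hg : ConvexOn ℝ univ g)
    (hs : ∀ z, (f + g) s ≤ (f + g) z) : Tendsto (fun n => y n - x n) atTop (𝓝 0) :=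
  tendsto_zero_of_tendsto_norm_succ_sq <| squeeze_zero (fun _ => sq_nonneg _)
    (fun _ => le_add_of_nonneg_right (sq_nonneg _)) (h.tendsto_increments_sq hf' hg hs)

theorem tendsto_x_succ_sub_y (h : IsExtrapolatedProxGrad f' g th α x y lam θ)
    (hf' : ∀ z, IsSubgradientAt f (f' z) z) (hg : ConvexOn ℝ univ g)
    (hs : ∀ z, (f + g) s ≤ (f + g) z) : Tendsto (fun n => x (n + 1) - y n) atTop (𝓝 0) :=
  tendsto_zero_of_tendsto_norm_succ_sq <| squeeze_zero (fun _ => sq_nonneg _)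
    (fun _ => le_add_of_nonneg_left (sq_nonneg _)) (h.tendsto_increments_sq hf' hg hs)

theorem x_succ_mem_closedBall (h : IsExtrapolatedProxGrad f' g th α x y lam θ)
    (hf' : ∀ z, IsSubgradientAt f (f' z) z) (hg : ConvexOn ℝ univ g)
    (hs : ∀ z, (f + g) s ≤ (f + g) z) (n : ℕ) :
    x (n + 1) ∈ Metric.closedBall s √(energy (f + g) th α x y lam θ s 0) := by
  rw [mem_closedBall_iff_norm']
  exact Real.le_sqrt_of_sq_le
    ((h.norm_sub_sq_le_energy hs n).trans (h.energy_antitone hf' hg hs n.zero_le))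

theorem exists_subseq_tendsto_minimizer [FiniteDimensional ℝ E]
    (h : IsExtrapolatedProxGrad f' g th α x y lam θ)
    (hf' : ∀ z, IsSubgradientAt f (f' z) z) (hg : ConvexOn ℝ univ g)
    (hmin : ∃ m, ∀ z, (f + g) m ≤ (f + g) z) (hlimsup : 0 < limsup lam atTop) :
    ∃ xs, (∀ z, (f + g) xs ≤ (f + g) z) ∧ ∃ φ : ℕ → ℕ, Tendsto φ atTop atTop ∧
      Tendsto (x ∘ φ) atTop (𝓝 xs) := by
  obtain ⟨m, hm⟩ := hmin
  obtain ⟨δ, hδ, hδlim⟩ := exists_between hlimsup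
  have hfreq : ∃ᶠ n in atTop, δ < lam n := frequently_lt_of_lt_limsup
    (isBoundedUnder_of ⟨0, fun n => (h.lam_pos n).le⟩).isCoboundedUnder_le hδlim
  obtain ⟨φ, hφ, hφδ⟩ := extraction_of_frequently_atTop hfreq
  obtain ⟨xs, -, ψ, hψ, hp⟩ := tendsto_subseq_of_bounded Metric.isBounded_closedBall
    fun k => h.x_succ_mem_closedBall hf' hg hm (φ k)
  have hφψ := hφ.tendsto_atTop.comp hψ.tendsto_atTop
  have hy : Tendsto (y ∘ φ ∘ ψ) atTop (𝓝 xs) := by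
    simpa [Function.comp_def] using hp.sub ((h.tendsto_x_succ_sub_y hf' hg hm).comp hφψ)
  have hx : Tendsto (x ∘ φ ∘ ψ) atTop (𝓝 xs) := by
    simpa [Function.comp_def] using hy.sub ((h.tendsto_y_sub_x hf' hg hm).comp hφψ)
  have hfc := (convexOn_univ_of_forall_isSubgradientAt hf').locallyLipschitz.continuous
  have hgc := hg.locallyLipschitz.continuous
  refine ⟨xs, ?_, φ ∘ ψ, hφψ, hx⟩
  exact add_le_of_tendsto_forwardBackward hfc.continuousAt hgc.continuousAt hδ
    (fun k => hφδ (ψ k)) (fun k => hf' (y (φ (ψ k)))) (fun k => h.isSubgradientAt_succ hg _)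
    hx hy hp

theorem isBoundedUnder_norm_weight (h : IsExtrapolatedProxGrad f' g th α x y lam θ)
    (hbdd : IsBoundedUnder (· ≤ ·) atTop lam) :
    IsBoundedUnder (· ≤ ·) atTop (norm ∘ fun n => 2 * lam n * (1 + th * θ n)) := by
  obtain ⟨C, hC⟩ := hbdd.eventually_le
  refine isBoundedUnder_of_eventually_le (a := 2 * C * (1 + th * max 2 (θ 0))) ?_
  filter_upwards [hC] with n hn
  have := h.one_le_th
  have hlam := h.lam_pos n
  have := h.θ_pos n
  have := h.θ_le n
  have := hlam.trans_le hn
  rw [Function.comp_apply, Real.norm_of_nonneg (by positivity)]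
  gcongr

theorem tendsto_energy_zero_of_subseq (h : IsExtrapolatedProxGrad f' g th α x y lam θ)
    (hf' : ∀ z, IsSubgradientAt f (f' z) z) (hg : ConvexOn ℝ univ g)
    (hs : ∀ z, (f + g) s ≤ (f + g) z) (hcont : ContinuousAt (f + g) s)
    (hbdd : IsBoundedUnder (· ≤ ·) atTop lam) {φ : ℕ → ℕ} (hφ : Tendsto φ atTop atTop)
    (hx : Tendsto (x ∘ φ) atTop (𝓝 s)) :
    Tendsto (energy (f + g) th α x y lam θ s) atTop (𝓝 0) := by
  have hy : Tendsto (y ∘ φ) atTop (𝓝 s) := by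
    simpa [Function.comp_def] using ((h.tendsto_y_sub_x hf' hg hs).comp hφ).add hx
  have hd := (h.tendsto_x_succ_sub_y hf' hg hs).comp hφ
  have hp : Tendsto (fun k => x (φ k + 1)) atTop (𝓝 s) := by
    simpa [Function.comp_def] using hd.add hy
  have hgap : Tendsto (fun k => (f + g) (x (φ k)) - (f + g) s) atTop (𝓝 0) := by
    simpa only [sub_self, Function.comp_def] using
      (hcont.tendsto.comp hx).sub_const ((f + g) s)
  have hweighted : Tendsto (fun k => 2 * lam (φ k) * (1 + th * θ (φ k)) *
      ((f + g) (x (φ k)) - (f + g) s)) atTop (𝓝 0) :=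
    isBoundedUnder_le_mul_tendsto_zero
      (hφ.isBoundedUnder_comp (h.isBoundedUnder_norm_weight hbdd)) hgap
  rw [tendsto_iff_tendsto_subseq_of_antitone (h.energy_antitone hf' hg hs) hφ]
  simpa [energy, Function.comp_def] using
    (((hp.const_sub s).norm.pow 2).add ((hd.norm.pow 2).const_mul ((2 * th - 1) * α))).add hweighted

theorem tendsto_of_tendsto_energy_zero (h : IsExtrapolatedProxGrad f' g th α x y lam θ)
    (hs : ∀ z, Φ s ≤ Φ z) (hV : Tendsto (energy Φ th α x y lam θ s) atTop (𝓝 0)) :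
    Tendsto x atTop (𝓝 s) := by
  have hsub : Tendsto (fun n => s - x n) atTop (𝓝 0) := tendsto_zero_of_tendsto_norm_succ_sq <|
    squeeze_zero (fun _ => sq_nonneg _) (h.norm_sub_sq_le_energy hs) hV
  simpa using hsub.const_sub s

end IsExtrapolatedProxGrad

theorem alg3_converges_general {E : Type*} [NormedAddCommGroup E] [InnerProductSpace ℝ E]
    [FiniteDimensional ℝ E] {f g : E → ℝ} {f' : E → E} {th α : ℝ} {x y : ℕ → E} {lam θ : ℕ → ℝ}
    (h : IsExtrapolatedProxGrad f' g th α x y lam θ) (hf' : ∀ z, IsSubgradientAt f (f' z) z)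
    (hg : ConvexOn ℝ univ g) (hmin : ∃ m, ∀ z, (f + g) m ≤ (f + g) z)
    (hbdd : IsBoundedUnder (· ≤ ·) atTop lam) (hlimsup : 0 < limsup lam atTop) :
    ∃ xs, (∀ z, (f + g) xs ≤ (f + g) z) ∧ Tendsto x atTop (𝓝 xs) ∧ Tendsto y atTop (𝓝 xs) := by
  obtain ⟨xs, hxs, φ, hφ, hxφ⟩ := h.exists_subseq_tendsto_minimizer hf' hg hmin hlimsup
  have hf := convexOn_univ_of_forall_isSubgradientAt hf'
  have hcont : Continuous (f + g) := (hf.add hg).locallyLipschitz.continuous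
  have hV := h.tendsto_energy_zero_of_subseq hf' hg hxs hcont.continuousAt hbdd hφ hxφ
  have hx := h.tendsto_of_tendsto_energy_zero hxs hV
  refine ⟨xs, hxs, hx, ?_⟩
  simpa using (h.tendsto_y_sub_x hf' hg hxs).add hx

/-- Convergence of Algorithm 3 (Theorem 3.3 of the paper). -/
theorem alg3_converges
    {E : Type*} [NormedAddCommGroup E] [InnerProductSpace ℝ E] [FiniteDimensional ℝ E]
    (f : E → ℝ) (hf : ConvexOn ℝ Set.univ f)
    (f' : E → E) (hf' : ∀ z : E, HasGradientAt f (f' z) z) (hf'lip : LocallyLipschitz f')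
    (g : E → ℝ) (hg : ConvexOn ℝ Set.univ g)
    (Φ : E → ℝ) (hΦ : ∀ z : E, Φ z = f z + g z)
    (hmin : ∃ m : E, ∀ z : E, Φ m ≤ Φ z)
    (th : ℝ) (hth : th ∈ Set.Icc (1 : ℝ) 2)
    (α : ℝ) (hα : α ∈ Set.Ioo 0 (Real.sqrt 2 - 1))
    (lamMax : ℝ) (hmax : 0 < lamMax)
    (x y : ℕ → E) (lam θ : ℕ → ℝ)
    (hlampos : ∀ n, 0 < lam n) (hθ0 : θ 0 = 1) (hθpos : ∀ n, 1 ≤ n → 0 < θ n)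
    (hlammax : ∀ n, 1 ≤ n → lam n ≤ lamMax)
    (hlamrec : ∀ n, 1 ≤ n → lam n = (2 - 1 / th) * θ n * lam (n - 1))
    (hθrec : ∀ n, 1 ≤ n → θ n ^ 2 ≤ (1 + th * θ (n - 1)) / (2 * th - 1))
    (hθle : ∀ n, 1 ≤ n → θ n ≤ 2)
    (hy : ∀ n, 1 ≤ n → y n = x n + θ n • (x n - x (n - 1)))
    (hls : ∀ n, 1 ≤ n →
      lam n * ‖f' (y n) - f' (y (n - 1))‖ ≤ α * (2 - 1 / th) * ‖y n - y (n - 1)‖)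
    (hprox : ∀ n : ℕ, ∀ z : E,
      lam n * g (x (n + 1)) + (1 / 2) * ‖x (n + 1) - (x n - lam n • f' (y n))‖ ^ 2 ≤
        lam n * g z + (1 / 2) * ‖z - (x n - lam n • f' (y n))‖ ^ 2)
    (hlimsup : 0 < Filter.limsup lam Filter.atTop) :
    ∃ xs : E, (∀ z : E, Φ xs ≤ Φ z) ∧
      Filter.Tendsto x Filter.atTop (nhds xs) ∧
      Filter.Tendsto y Filter.atTop (nhds xs) := by
  obtain rfl : Φ = f + g := funext hΦ
  have hθ : ∀ n, 0 < θ n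
    | 0 => hθ0 ▸ one_pos
    | n + 1 => hθpos (n + 1) n.succ_pos
  have hrun : IsExtrapolatedProxGrad f' g th α x y lam θ :=
    ⟨hth.1, hα.1.le, hα.2, hlampos, hθ, fun n => hlamrec (n + 1) n.succ_pos,
      fun n => hθrec (n + 1) n.succ_pos, fun n => hy (n + 1) n.succ_pos,
      fun n => hls (n + 1) n.succ_pos, hprox⟩
  exact alg3_converges_general hrun (fun z => isSubgradientAt_of_hasGradientAt hf (hf' z)) hg hmin
    (isBoundedUnder_of_eventually_le (eventually_atTop.2 ⟨1, hlammax⟩)) hlimsup
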